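/- For all real numbers x and y, the series ∑_{m=0}^{∞} (∑_{h=0}^{m} (h+1)·S(m, h+1)·x^h)·y^m/m! converges absolutely and equals (e^y − 1)·e^{x(e^y − 1)}. -/

import Mathlib

open Pointwise

noncomputable section

/-- The simplex Δ_F ⊆ ℝ^n for F ⊆ {0,…,n−1}. -/
def stdSimplexOn (n : ℕ) (F : Finset (Fin n)) : Set (Fin n → ℝ) :=
  {x | (∀ i, 0 ≤ x i) ∧ (∀ i, i ∉ F → x i = 0) ∧ ∑ i, x i = 1}

/-- The general permutahedron Π_{n−1}(k−1) ⊆ ℝ^n, Minkowski sum of all Δ_F with |F| = k. -/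
def genPerm (n k : ℕ) : Set (Fin n → ℝ) :=
  ∑ F ∈ Finset.univ.powersetCard k, stdSimplexOn n F

/-- P_{n−1}(v): convex hull of the orbit of v under coordinate permutations. -/
def permPoly {n : ℕ} (v : Fin n → ℝ) : Set (Fin n → ℝ) :=
  convexHull ℝ {w | ∃ σ : Equiv.Perm (Fin n), w = v ∘ σ}

/-- Dimension of a subset of ℝ^n : dimension of its affine span. -/
def setDim {n : ℕ} (S : Set (Fin n → ℝ)) : ℕ :=
  Module.finrank ℝ (affineSpan ℝ S).direction

/-- Nonempty exposed face of P : the maximizer set of some linear functional. -/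
def IsExpFace {n : ℕ} (P A : Set (Fin n → ℝ)) : Prop :=
  A.Nonempty ∧ ∃ L : (Fin n → ℝ) →ₗ[ℝ] ℝ, A = {x ∈ P | ∀ y ∈ P, L y ≤ L x}

/-- Stirling numbers of the second kind. -/
def stirling2 : ℕ → ℕ → ℕ
  | 0, 0 => 1
  | 0, _ + 1 => 0
  | _ + 1, 0 => 0
  | n + 1, k + 1 => (k + 1) * stirling2 n (k + 1) + stirling2 n k

/-- i-th backward difference of u at position k. -/
def bdiff {n : ℕ} (u : Fin n → ℝ) (i : ℕ) (k : Fin n) : ℝ :=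
  ∑ j ∈ Finset.range (i + 1), (-1 : ℝ) ^ j * (i.choose j) *
    u ⟨(k : ℕ) - j, lt_of_le_of_lt (Nat.sub_le _ _) k.isLt⟩

/-- The number of chains A_1 ⊆ ⋯ ⊆ A_ℓ of nonempty exposed faces of P with dim A_i = s i. -/
def flagCount {n : ℕ} (P : Set (Fin n → ℝ)) (l : ℕ) (s : Fin l → ℕ) : ℕ :=
  Nat.card {A : Fin l → Set (Fin n → ℝ) //
    (∀ i, IsExpFace P (A i) ∧ setDim (A i) = s i) ∧ ∀ i j, i ≤ j → A i ⊆ A j}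

/-- The exponential (l+1)-flag polynomial of P ⊆ ℝ^n (a polytope of dimension n−1). -/
def xiFlag {n : ℕ} (P : Set (Fin n → ℝ)) (l : ℕ) (x : Fin (l + 1) → ℝ) : ℝ :=
  ∑ s : Fin (l + 1) → Fin n, if Monotone s then
    ((flagCount P (l + 1) (fun i => (s i : ℕ)) : ℝ) / (Nat.factorial (n - (s 0 : ℕ)))) *
      ∏ i : Fin (l + 1), x i ^ (if (i : ℕ) = 0 then (s i : ℕ) else
        (s i : ℕ) - (s ⟨(i : ℕ) - 1, lt_of_le_of_lt (Nat.sub_le _ _) i.isLt⟩ : ℕ))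
  else 0

/-- The standard permutahedron Π_{n−1} ⊆ ℝ^n. -/
def stdPermutahedron (n : ℕ) : Set (Fin n → ℝ) :=
  convexHull ℝ {w | ∃ σ : Equiv.Perm (Fin n), ∀ i, w i = ((σ i : ℕ) : ℝ) + 1}

/-- E_m(t) = ∑_{j=0}^m t^j/j!, the degree-m Taylor polynomial of exp. -/
def Etaylor (m : ℕ) (t : ℝ) : ℝ :=
  ∑ j ∈ Finset.range (m + 1), t ^ j / (Nat.factorial j)

end
theorem stirling2_eq_zero_of_lt : ∀ (n k : ℕ), n < k → stirling2 n k = 0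
  | 0, 0, h => by omega
  | 0, k + 1, _ => by simp [stirling2]
  | n + 1, 0, h => by omega
  | n + 1, k + 1, h => by
    simp [stirling2, stirling2_eq_zero_of_lt n (k + 1) (by omega),
      stirling2_eq_zero_of_lt n k (by omega)]

theorem stirling2_explicit (m : ℕ) : ∀ k : ℕ, (k.factorial : ℝ) * stirling2 m k =
    ∑ j ∈ Finset.range (k + 1), (-1 : ℝ) ^ (k + j) * (k.choose j) * (j : ℝ) ^ m := by
  induction m with
  | zero =>
    intro k
    have h2 := Finset.sum_range_reflect
      (fun j => (-1 : ℝ) ^ (k + j) * (k.choose j) * (j : ℝ) ^ 0) (k + 1)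
    rw [← h2]
    have h3 : ∑ j ∈ Finset.range (k + 1), (-1 : ℝ) ^ (k + (k + 1 - 1 - j)) *
        (k.choose (k + 1 - 1 - j)) * ((k + 1 - 1 - j : ℕ) : ℝ) ^ 0 = (0 : ℝ) ^ k := by
      have h4 := add_pow (-1 : ℝ) 1 k
      rw [show (-1 : ℝ) + 1 = 0 by norm_num] at h4
      rw [h4]
      refine Finset.sum_congr rfl fun j hj => ?_
      have hj' : j ≤ k := by simpa [Nat.lt_succ_iff] using hj
      obtain ⟨d, rfl⟩ := Nat.exists_eq_add_of_le hj'
      rw [show j + d + 1 - 1 - j = d by omega, show j + d + d = j + 2 * d by omega,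
        pow_add, pow_mul, Nat.choose_symm_add]
      simp
    rw [h3]
    cases k <;> simp [stirling2]
  | succ m ih =>
    intro k
    cases k with
    | zero => simp [stirling2]
    | succ k =>
      have e1 := ih (k + 1)
      have e2 : (k.factorial : ℝ) * stirling2 m k =
          ∑ j ∈ Finset.range (k + 1 + 1), (-1 : ℝ) ^ (k + j) * (k.choose j) * (j : ℝ) ^ m := by
        rw [Finset.sum_range_succ, ih k]; simp
      have : ((k + 1).factorial : ℝ) * stirling2 (m + 1) (k + 1) =
          (k + 1) * (((k + 1).factorial : ℝ) * stirling2 m (k + 1)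
            + (k.factorial : ℝ) * stirling2 m k) := by
        simp only [stirling2, Nat.factorial_succ]; push_cast; ring
      rw [this, e1, e2, ← Finset.sum_add_distrib, Finset.mul_sum]
      refine Finset.sum_congr rfl fun j _ => ?_
      cases j with
      | zero => simp; right; ring
      | succ j =>
        have c1 : ((k : ℝ) + 1) * k.choose j = (k + 1).choose (j + 1) * (j + 1) := by
          exact_mod_cast Nat.add_one_mul_choose_eq k j
        have c2 : ((k + 1).choose (j + 1) : ℝ) = k.choose j + k.choose (j + 1) := by
          exact_mod_cast Nat.choose_succ_succ k j
        have c3 : ((k : ℝ) + 1) * ((k + 1).choose (j + 1) - k.choose (j + 1))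
            = (k + 1).choose (j + 1) * (j + 1) := by rw [← c1, c2]; ring
        push_cast
        linear_combination (-1 : ℝ) ^ (k + 1 + (j + 1)) * ((j : ℝ) + 1) ^ m * c3

theorem stirling2_hasSum (k : ℕ) (y : ℝ) :
    HasSum (fun m : ℕ => (stirling2 m k : ℝ) * y ^ m / m.factorial)
      ((Real.exp y - 1) ^ k / k.factorial) := by
  have hk : (k.factorial : ℝ) ≠ 0 := by positivity
  have h : HasSum (fun m : ℕ => ∑ j ∈ Finset.range (k + 1),
      (-1 : ℝ) ^ (k + j) * (k.choose j) * (((j : ℝ) * y) ^ m / m.factorial))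
      (∑ j ∈ Finset.range (k + 1), (-1 : ℝ) ^ (k + j) * (k.choose j) * Real.exp (j * y)) := by
    refine hasSum_sum fun j _ => HasSum.mul_left _ ?_
    rw [Real.exp_eq_exp_ℝ]
    exact NormedSpace.expSeries_div_hasSum_exp _
  have h2 := h.div_const (k.factorial : ℝ)
  convert h2 using 1
  · rfl
  · funext m
    have := stirling2_explicit m k
    rw [eq_div_iff hk]
    calc _ = ((k.factorial : ℝ) * stirling2 m k) * (y ^ m / m.factorial) := by ring
      _ = _ := by
        rw [this, Finset.sum_mul]
        refine Finset.sum_congr rfl fun j _ => ?_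
        rw [mul_pow]; ring
  · congr 1
    rw [sub_eq_add_neg, add_pow]
    refine Finset.sum_congr rfl fun j hj => ?_
    have hj' : j ≤ k := by simpa [Nat.lt_succ_iff] using hj
    obtain ⟨d, rfl⟩ := Nat.exists_eq_add_of_le hj'
    rw [Real.exp_nat_mul, show j + d - j = d by omega, show j + d + j = d + 2 * j by omega,
      pow_add (-1 : ℝ), pow_mul]
    norm_num
    ring

theorem stirling2_hasSum_row (x y : ℝ) (h : ℕ) :
    HasSum (fun m : ℕ => ((h + 1) * stirling2 m (h + 1) : ℝ) * x ^ h * y ^ m / m.factorial)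
      ((Real.exp y - 1) * ((x * (Real.exp y - 1)) ^ h / h.factorial)) := by
  convert (stirling2_hasSum (h + 1) y).mul_left (((h : ℝ) + 1) * x ^ h) using 1
  · rfl
  · funext m; ring
  · rw [Nat.factorial_succ]; push_cast; field_simp; rw [mul_pow]; ring

theorem exp_hasSum_aux (x y : ℝ) :
    HasSum (fun h : ℕ => (Real.exp y - 1) * ((x * (Real.exp y - 1)) ^ h / h.factorial))
      ((Real.exp y - 1) * Real.exp (x * (Real.exp y - 1))) := by
  refine HasSum.mul_left _ ?_
  nth_rewrite 2 [Real.exp_eq_exp_ℝ]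
  exact NormedSpace.expSeries_div_hasSum_exp _

/-- ∑_{m≥0} (∑_{h=0}^m (h+1)·S(m,h+1)·x^h)·y^m/m! converges
absolutely and equals (e^y − 1)·e^{x(e^y−1)}. -/
theorem stirling_egf_identity (x y : ℝ) :
    (Summable fun m : ℕ =>
      |(∑ h ∈ Finset.range (m + 1), ((h + 1) * stirling2 m (h + 1) : ℝ) * x ^ h)
        * y ^ m / Nat.factorial m|) ∧
    ∑' m : ℕ, (∑ h ∈ Finset.range (m + 1), ((h + 1) * stirling2 m (h + 1) : ℝ) * x ^ h)
        * y ^ m / Nat.factorial m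
      = (Real.exp y - 1) * Real.exp (x * (Real.exp y - 1)) := by
  set F : ℕ × ℕ → ℝ := fun p =>
    ((p.1 + 1) * stirling2 p.2 (p.1 + 1) : ℝ) * x ^ p.1 * y ^ p.2 / p.2.factorial with hF
  have hn : ∀ p, ‖F p‖ =
      ((p.1 + 1) * stirling2 p.2 (p.1 + 1) : ℝ) * |x| ^ p.1 * |y| ^ p.2 / p.2.factorial := by
    intro p
    simp only [hF, Real.norm_eq_abs, abs_div, abs_mul, abs_pow, Nat.abs_cast]
    rw [abs_of_nonneg (by positivity : (0 : ℝ) ≤ p.1 + 1)]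
  have hs : Summable fun p => ‖F p‖ := by
    refine (summable_prod_of_nonneg fun p => norm_nonneg _).2 ⟨fun h => ?_, ?_⟩
    · simp only [hn]
      exact (stirling2_hasSum_row |x| |y| h).summable
    · simp only [hn]
      convert (exp_hasSum_aux |x| |y|).summable using 2 with h
      exact (stirling2_hasSum_row |x| |y| h).tsum_eq
  have hsum : HasSum F ((Real.exp y - 1) * Real.exp (x * (Real.exp y - 1))) := by
    have h1 := hs.of_norm.hasSum
    have h2 := h1.prod_fiberwise (fun h => stirling2_hasSum_row x y h)
    rwa [h2.unique (exp_hasSum_aux x y)] at h1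
  have hrow : ∀ m : ℕ, HasSum (fun h : ℕ => F (h, m))
      ((∑ h ∈ Finset.range (m + 1), ((h + 1) * stirling2 m (h + 1) : ℝ) * x ^ h)
        * y ^ m / Nat.factorial m) := by
    intro m
    rw [Finset.sum_mul, Finset.sum_div]
    refine hasSum_sum_of_ne_finset_zero fun h hh => ?_
    have : m < h + 1 := by simp at hh; omega
    simp [hF, stirling2_eq_zero_of_lt m (h + 1) this]
  have hs' : Summable fun p : ℕ × ℕ => ‖F p.swap‖ := hs.prod_symm
  constructor
  · refine Summable.of_nonneg_of_le (fun _ => abs_nonneg _) (fun m => ?_) hs'.prod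
    rw [← (hrow m).tsum_eq, ← Real.norm_eq_abs]
    exact norm_tsum_le_tsum_norm (hs'.prod_factor m)
  · have h3 : HasSum (fun p : ℕ × ℕ => F p.swap) _ :=
      (Equiv.prodComm ℕ ℕ).hasSum_iff.2 hsum
    exact (h3.prod_fiberwise hrow).tsum_eq
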